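/- Let Γ be a cardinal of uncountable cofinality, X a Banach space, and T : ℓ_∞^c(Γ) → X a bounded operator that does not fix a copy of c_0(Γ) (i.e. there is no bounded operator U : c_0(Γ) → ℓ_∞^c(Γ) such that TU is an isomorphic embedding). Then there exists Λ ⊆ Γ with |Λ| = Γ such that ℓ_∞^c(Λ) := {x ∈ ℓ_∞^c(Γ) : supp x ⊆ Λ} ⊆ ker T. -/

import Mathlib

/-! Suppose no such `Λ` exists. Split `Γ` into `#Γ` disjoint fibres of size `#Γ`; each fibre
supports some `y i` in the unit ball with `T (y i) ≠ 0`, and since `#Γ` has uncountable cofinality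
one may pass to `#Γ` many indices along which `‖T (y i)‖` is bounded below by some `δ > 0`. Since
the `y i` are disjointly supported, `e i ↦ y i` extends to a bounded operator
`U : c₀(Γ) → ℓ_∞^c(Γ)` (a weighted composition operator), and `‖T U e i‖ ≥ δ`. Rosenthal's theorem
for `c₀(Γ)` (`exists_c0_lower_bound`) then says that `T U` is bounded below on a copy of `c₀(Γ)`,
contradicting the hypothesis on `T`.

Rosenthal's theorem rests on his disjointness lemma (`exists_injective_sum_le`): if the rows of a
nonnegative `Γ × Γ` matrix have bounded sums, then on a suitable `Γ' ⊆ Γ` with `#Γ' = #Γ` the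
off-diagonal row sums are at most `ε`. It is applied to `|f i (W (e j))|`, with `f i` a functional
norming `W (e i)`.
-/

open Cardinal Set

/-- The subspace `ℓ_∞^c(Γ)` of `ℓ_∞(Γ)` consisting of countably supported elements. -/
noncomputable def ellc (Γ : Type*) : Submodule ℝ (lp (fun _ : Γ => ℝ) ⊤) where
  carrier := {x | {γ : Γ | x γ ≠ 0}.Countable}
  add_mem' := by
    intro x y hx hy
    refine Set.Countable.mono ?_ (hx.union hy)
    intro γ h
    simp only [Set.mem_setOf_eq, Set.mem_union]
    by_contra hc
    push_neg at hc
    exact h (by simp [hc.1, hc.2])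
  zero_mem' := by
    refine Set.Countable.mono ?_ Set.countable_empty
    intro γ h
    exact h (by simp)
  smul_mem' := by
    intro c x hx
    refine Set.Countable.mono ?_ hx
    intro γ h
    simp only [Set.mem_setOf_eq] at h ⊢
    intro h0
    exact h (by simp [h0])

/-- The canonical copy of `c₀(ι)` inside `ℓ_∞(ι)`: the closed span of the unit vectors. -/
noncomputable def c0sub (ι : Type*) : Submodule ℝ (lp (fun _ : ι => ℝ) ⊤) :=
  (Submodule.span ℝ
    {x : lp (fun _ : ι => ℝ) ⊤ | ∃ i : ι, ⇑x = Set.indicator {i} (1 : ι → ℝ)}).topologicalClosure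

/-! ### Rosenthal's disjointness lemma -/

/-- Rosenthal's disjointness lemma, with the large subset of `Γ` encoded as the range of an
injection `s`. If none of the `Γ`-many disjoint copies of `Γ` inside `Γ × Γ ≃ Γ` works, choose in
each copy a bad row; restricting to these rows and columns discards mass more than `ε` from each
row, which can happen at most `n` times. -/
lemma exists_injective_sum_le {Γ : Type*} (e : Γ × Γ ≃ Γ) {ε : ℝ} (hε : 0 < ε) (n : ℕ) :
    ∀ a : Γ → Γ → ℝ, (∀ i (F : Finset Γ), ∑ j ∈ F, a i j ≤ n * ε) →
      ∃ s : Γ → Γ, Function.Injective s ∧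
        ∀ i (F : Finset Γ), i ∉ F → ∑ j ∈ F, a (s i) (s j) ≤ ε := by
  classical
  induction n with
  | zero =>
    intro a ha
    refine ⟨id, Function.injective_id, fun i F _ => (ha i F).trans ?_⟩
    simp [hε.le]
  | succ n ih =>
    intro a ha
    by_cases h : ∃ i, ∀ j (F : Finset Γ), j ∉ F → ∑ k ∈ F, a (e (i, j)) (e (i, k)) ≤ ε
    · obtain ⟨i, hi⟩ := h
      exact ⟨fun j => e (i, j), fun j k hjk => by simpa using hjk, hi⟩
    · push Not at h
      choose b G hbG hG using h
      obtain ⟨s, hs, hsum⟩ := ih (fun i k => a (e (i, b i)) (e (k, b k))) (by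
        intro i F
        have hdisj : Disjoint (F.image fun k => e (k, b k)) ((G i).image fun k => e (i, k)) := by
          rw [Finset.disjoint_left]
          intro γ h1 h2
          obtain ⟨k, -, rfl⟩ := Finset.mem_image.1 h1
          obtain ⟨m, hm, hmk⟩ := Finset.mem_image.1 h2
          obtain ⟨rfl, rfl⟩ := Prod.mk.inj (e.injective hmk)
          exact hbG _ hm
        have hle := ha (e (i, b i))
          ((F.image fun k => e (k, b k)) ∪ ((G i).image fun k => e (i, k)))
        rw [Finset.sum_union hdisj,
          Finset.sum_image (fun k _ m _ hkm => (Prod.mk.inj (e.injective hkm)).1),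
          Finset.sum_image (fun k _ m _ hkm => (Prod.mk.inj (e.injective hkm)).2)] at hle
        push_cast at hle
        linarith [hG i])
      refine ⟨fun i => e (s i, b (s i)), fun i k hik => ?_, hsum⟩
      exact hs (Prod.mk.inj (e.injective hik)).1

/-! ### Operators on `c₀(Γ)` -/

/-- The weighted composition operator `z ↦ w · (z ∘ q)` on `ℓ_∞(Γ)`. -/
lemma exists_weighted_comp {Γ : Type*} (q : Γ → Γ) (w : Γ → ℝ) (hw : ∀ γ, |w γ| ≤ 1) :
    ∃ L : lp (fun _ : Γ => ℝ) ⊤ →L[ℝ] lp (fun _ : Γ => ℝ) ⊤,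
      ∀ z γ, L z γ = w γ * z (q γ) := by
  have hb : ∀ (z : lp (fun _ : Γ => ℝ) ⊤) γ, ‖w γ * z (q γ)‖ ≤ ‖z‖ := by
    intro z γ
    rw [norm_mul, Real.norm_eq_abs (w γ)]
    have := lp.norm_apply_le_norm ENNReal.top_ne_zero z (q γ)
    nlinarith [hw γ, norm_nonneg (z (q γ))]
  let L : lp (fun _ : Γ => ℝ) ⊤ →ₗ[ℝ] lp (fun _ : Γ => ℝ) ⊤ :=
    { toFun := fun z => ⟨fun γ => w γ * z (q γ), memℓp_infty ⟨‖z‖, by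
        rintro _ ⟨γ, rfl⟩
        exact hb z γ⟩⟩
      map_add' := fun x y => by
        ext γ
        exact mul_add _ _ _
      map_smul' := fun c x => by
        ext γ
        exact mul_left_comm _ _ _ }
  refine ⟨L.mkContinuous 1 fun z => ?_, fun z γ => rfl⟩
  rw [one_mul]
  exact lp.norm_le_of_forall_le (norm_nonneg z) (hb z)

open Classical in
lemma single_mem_c0sub {Γ : Type*} (j : Γ) :
    lp.single (E := fun _ : Γ => ℝ) ⊤ j 1 ∈ c0sub Γ := by
  refine Submodule.le_topologicalClosure _ (Submodule.subset_span ⟨j, ?_⟩)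
  funext i
  by_cases h : i = j
  · subst h
    simp
  · simp [h]

open Classical in
/-- The unit vector `e j` of `c₀(Γ)`. -/
noncomputable def c0single {Γ : Type*} (j : Γ) : c0sub Γ :=
  ⟨lp.single (E := fun _ : Γ => ℝ) ⊤ j 1, single_mem_c0sub j⟩

open Classical in
lemma c0single_apply {Γ : Type*} (j i : Γ) :
    (c0single j : lp (fun _ : Γ => ℝ) ⊤) i = if i = j then 1 else 0 := by
  by_cases h : i = j
  · subst h
    simp [c0single]
  · simp [c0single, h]

lemma sum_c0single_apply {Γ : Type*} (F : Finset Γ) (c : Γ → ℝ) (i : Γ) :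
    ((∑ j ∈ F, c j • c0single j : c0sub Γ) : lp (fun _ : Γ => ℝ) ⊤) i =
      open Classical in if i ∈ F then c i else 0 := by
  classical
  rw [Submodule.coe_sum, lp.coeFn_sum, Finset.sum_apply]
  simp [c0single_apply]

/-- An operator on `ℓ_∞(Γ)` sending the unit vectors into a closed subspace `M` maps `c₀(Γ)`
into `M`. -/
lemma exists_c0_restrict {Γ : Type*} (L : lp (fun _ : Γ => ℝ) ⊤ →L[ℝ] lp (fun _ : Γ => ℝ) ⊤)
    (M : Submodule ℝ (lp (fun _ : Γ => ℝ) ⊤)) (hM : IsClosed (M : Set (lp (fun _ : Γ => ℝ) ⊤)))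
    (hL : ∀ j, L (c0single j : c0sub Γ) ∈ M) :
    ∃ U : c0sub Γ →L[ℝ] M, ∀ z, (U z : lp (fun _ : Γ => ℝ) ⊤) = L z := by
  have hle : c0sub Γ ≤ M.comap L.toLinearMap := by
    refine Submodule.topologicalClosure_minimal _ ?_ (hM.preimage L.continuous)
    rw [Submodule.span_le]
    rintro x ⟨i, hx⟩
    have : x = (c0single i : c0sub Γ) := by
      ext γ
      rw [hx, c0single_apply]
      by_cases h : γ = i <;> simp [h]
    rw [this]
    exact hL i
  exact ⟨(L.comp (c0sub Γ).subtypeL).codRestrict M fun z => hle z.2, fun z => rfl⟩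

/-- A continuous functional on `c₀(Γ)` is given by an `ℓ_1` sequence of norm at most `‖g‖`. -/
lemma sum_abs_le {Γ : Type*} (g : c0sub Γ →L[ℝ] ℝ) (F : Finset Γ) :
    ∑ j ∈ F, |g (c0single j)| ≤ ‖g‖ := by
  classical
  set z : c0sub Γ := ∑ j ∈ F, (SignType.sign (g (c0single j)) : ℝ) • c0single j with hz
  have hgz : g z = ∑ j ∈ F, |g (c0single j)| := by
    rw [hz, map_sum]
    refine Finset.sum_congr rfl fun j _ => ?_
    rw [map_smul, smul_eq_mul, sign_mul_self]
  have hz1 : ‖z‖ ≤ 1 := by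
    refine lp.norm_le_of_forall_le zero_le_one fun i => ?_
    have hzi := sum_c0single_apply F (fun j => (SignType.sign (g (c0single j)) : ℝ)) i
    rw [← hz] at hzi
    change ‖(z : lp (fun _ : Γ => ℝ) ⊤) i‖ ≤ 1
    rw [hzi]
    split_ifs
    · rcases SignType.sign (g (c0single i)) with _ | _ | _ <;> simp
    · simp
  rw [← hgz]
  calc g z ≤ ‖g z‖ := le_abs_self _
    _ ≤ ‖g‖ * ‖z‖ := g.le_opNorm z
    _ ≤ ‖g‖ := mul_le_of_le_one_right (norm_nonneg g) hz1

/-- Finitely supported vectors are dense in `c₀(Γ)`. -/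
lemma c0_induction {Γ : Type*} {P : c0sub Γ → Prop} (hP : IsClosed {z | P z})
    (h : ∀ (F : Finset Γ) (c : Γ → ℝ), P (∑ j ∈ F, c j • c0single j)) (z : c0sub Γ) : P z := by
  classical
  have hfin : ∀ x ∈ Submodule.span ℝ {x : lp (fun _ : Γ => ℝ) ⊤ |
      ∃ i : Γ, ⇑x = Set.indicator {i} (1 : Γ → ℝ)}, ∃ F : Finset Γ, ∀ i ∉ F, x i = 0 := by
    intro x hx
    induction hx using Submodule.span_induction with
    | mem x hx =>
      obtain ⟨i, hi⟩ := hx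
      refine ⟨{i}, fun k hk => ?_⟩
      rw [hi]
      exact Set.indicator_of_notMem (by simpa using hk) _
    | zero => exact ⟨∅, fun i _ => rfl⟩
    | add x y _ _ hx hy =>
      obtain ⟨F, hF⟩ := hx
      obtain ⟨G, hG⟩ := hy
      refine ⟨F ∪ G, fun i hi => ?_⟩
      rw [Finset.mem_union, not_or] at hi
      simp [hF i hi.1, hG i hi.2]
    | smul c x _ hx =>
      obtain ⟨F, hF⟩ := hx
      exact ⟨F, fun i hi => by simp [hF i hi]⟩
  obtain ⟨u, hu, hlim⟩ := mem_closure_iff_seq_limit.1 z.2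
  have hmem : ∀ n, u n ∈ c0sub Γ := fun n => Submodule.le_topologicalClosure _ (hu n)
  have hlim' : Filter.Tendsto (fun n => (⟨u n, hmem n⟩ : c0sub Γ)) Filter.atTop (nhds z) :=
    tendsto_subtype_rng.2 hlim
  refine hP.mem_of_tendsto hlim' (Filter.Eventually.of_forall fun n => ?_)
  obtain ⟨F, hF⟩ := hfin _ (hu n)
  have : (⟨u n, hmem n⟩ : c0sub Γ) = ∑ j ∈ F, u n j • c0single j := by
    apply Subtype.ext
    ext i
    rw [sum_c0single_apply]
    split_ifs with hi
    · rfl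
    · exact hF i hi
  exact this ▸ h F _

/-! ### Rosenthal's theorem for `c₀(Γ)` -/

/-- Rosenthal's theorem for `c₀(Γ)`, with the large subset of `Γ` on which `W` is bounded below
encoded by the embedding `E` of `c₀(Γ)` into itself. -/
lemma exists_c0_lower_bound {Γ X : Type*} [NormedAddCommGroup X] [NormedSpace ℝ X]
    (e : Γ × Γ ≃ Γ) (W : c0sub Γ →L[ℝ] X) {δ : ℝ} (hδ : 0 < δ)
    (hW : ∀ j, δ ≤ ‖W (c0single j)‖) :
    ∃ (E : c0sub Γ →L[ℝ] c0sub Γ) (c : ℝ), 0 < c ∧ ∀ z, c * ‖z‖ ≤ ‖W (E z)‖ := by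
  classical
  choose f hf1 hf using fun j => exists_dual_vector'' ℝ (W (c0single j))
  obtain ⟨n, hn⟩ := exists_nat_ge (‖W‖ / (δ / 2))
  rw [div_le_iff₀ (by positivity)] at hn
  obtain ⟨s, hs, hsum⟩ := exists_injective_sum_le e (half_pos hδ) n
    (fun i j => |f i (W (c0single j))|) (by
      intro i F
      calc ∑ j ∈ F, |f i (W (c0single j))| ≤ ‖(f i).comp W‖ := sum_abs_le ((f i).comp W) F
        _ ≤ ‖f i‖ * ‖W‖ := ContinuousLinearMap.opNorm_comp_le _ _
        _ ≤ ‖W‖ := mul_le_of_le_one_left (norm_nonneg W) (hf1 i)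
        _ ≤ n * (δ / 2) := hn)
  -- `E` sends `e j` to `e (s j)`.
  obtain ⟨L, hL⟩ := exists_weighted_comp
    (fun γ => if h : ∃ j, s j = γ then h.choose else γ)
    (fun γ => if ∃ j, s j = γ then 1 else 0) (by
      intro γ
      split_ifs <;> simp)
  have hLs : ∀ j, L (c0single j : c0sub Γ) = (c0single (s j) : c0sub Γ) := by
    intro j
    ext γ
    rw [hL, c0single_apply, c0single_apply]
    by_cases h : ∃ j, s j = γ
    · obtain ⟨k, rfl⟩ := h
      simp [hs.eq_iff]
    · have : γ ≠ s j := fun hγ => h ⟨j, hγ.symm⟩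
      simp [h, this]
  obtain ⟨E, hE⟩ := exists_c0_restrict L (c0sub Γ) (Submodule.isClosed_topologicalClosure _)
    (fun j => by rw [hLs]; exact (c0single (s j)).2)
  have hEs : ∀ j, E (c0single j) = c0single (s j) := fun j => Subtype.ext (by rw [hE, hLs])
  -- The functional `f (s k)` recovers the `k`-th coordinate up to an error `δ / 2 * ‖z‖`.
  have key : ∀ k (z : c0sub Γ),
      |f (s k) (W (E z)) - (z : lp (fun _ : Γ => ℝ) ⊤) k * ‖W (c0single (s k))‖|
        ≤ δ / 2 * ‖z‖ := by
    intro k z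
    refine c0_induction (P := fun z => |f (s k) (W (E z)) -
      (z : lp (fun _ : Γ => ℝ) ⊤) k * ‖W (c0single (s k))‖| ≤ δ / 2 * ‖z‖) ?_ ?_ z
    · have hc : Continuous fun z : c0sub Γ => (z : lp (fun _ : Γ => ℝ) ⊤) k :=
        (lp.evalCLM ℝ (fun _ : Γ => ℝ) ⊤ k).continuous.comp continuous_subtype_val
      exact isClosed_le (by fun_prop) (by fun_prop)
    · intro F c
      set z : c0sub Γ := ∑ j ∈ F, c j • c0single j with hz
      have hzc : ∀ j ∈ F, |c j| ≤ ‖z‖ := by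
        intro j hj
        have := lp.norm_apply_le_norm ENNReal.top_ne_zero (z : lp (fun _ : Γ => ℝ) ⊤) j
        rw [hz, sum_c0single_apply, if_pos hj] at this
        exact this
      have hsplit : f (s k) (W (E z)) - (z : lp (fun _ : Γ => ℝ) ⊤) k * ‖W (c0single (s k))‖ =
          ∑ j ∈ F.erase k, c j * f (s k) (W (c0single (s j))) := by
        have h1 : f (s k) (W (E z)) = ∑ j ∈ F, c j * f (s k) (W (c0single (s j))) := by
          simp [hz, map_sum, hEs]
        have hfk : f (s k) (W (c0single (s k))) = ‖W (c0single (s k))‖ := hf (s k)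
        rw [h1, hz, sum_c0single_apply]
        split_ifs with hk
        · rw [← Finset.add_sum_erase F _ hk, hfk]
          ring
        · rw [Finset.erase_eq_of_notMem hk]
          ring
      rw [hsplit]
      calc |∑ j ∈ F.erase k, c j * f (s k) (W (c0single (s j)))|
          ≤ ∑ j ∈ F.erase k, |c j * f (s k) (W (c0single (s j)))| :=
            Finset.abs_sum_le_sum_abs _ _
        _ ≤ ∑ j ∈ F.erase k, ‖z‖ * |f (s k) (W (c0single (s j)))| := by
            refine Finset.sum_le_sum fun j hj => ?_
            rw [abs_mul]
            exact mul_le_mul_of_nonneg_right (hzc j (Finset.mem_of_mem_erase hj)) (abs_nonneg _)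
        _ = ‖z‖ * ∑ j ∈ F.erase k, |f (s k) (W (c0single (s j)))| := by rw [Finset.mul_sum]
        _ ≤ ‖z‖ * (δ / 2) :=
            mul_le_mul_of_nonneg_left (hsum k _ (Finset.notMem_erase k F)) (norm_nonneg z)
        _ = δ / 2 * ‖z‖ := mul_comm _ _
  refine ⟨E, δ / 2, half_pos hδ, fun z => ?_⟩
  have hz : ‖z‖ ≤ (‖W (E z)‖ + δ / 2 * ‖z‖) / δ := by
    refine lp.norm_le_of_forall_le (by positivity) fun k => ?_
    rw [le_div_iff₀ hδ]
    set t : ℝ := (z : lp (fun _ : Γ => ℝ) ⊤) k with ht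
    have h1 : |f (s k) (W (E z))| ≤ ‖W (E z)‖ := by
      have := (f (s k)).le_of_opNorm_le (hf1 (s k)) (W (E z))
      rwa [one_mul] at this
    have h2 : |t * ‖W (c0single (s k))‖| ≤ ‖W (E z)‖ + δ / 2 * ‖z‖ := by
      have h3 := key k z
      rw [← ht] at h3
      rw [abs_le] at h1 h3 ⊢
      constructor <;> linarith
    rw [abs_mul, abs_norm] at h2
    exact (mul_le_mul_of_nonneg_left (hW (s k)) (abs_nonneg t)).trans h2
  rw [le_div_iff₀ hδ] at hz
  linarith

/-! ### Disjointly supported families in `ℓ_∞^c(Γ)` -/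

lemma isClosed_ellc (Γ : Type*) : IsClosed (ellc Γ : Set (lp (fun _ : Γ => ℝ) ⊤)) := by
  refine isClosed_of_closure_subset fun x hx => ?_
  obtain ⟨u, hu, hlim⟩ := mem_closure_iff_seq_limit.1 hx
  refine Set.Countable.mono ?_ (Set.countable_iUnion hu)
  intro γ hγ
  by_contra hc
  have h0 : ∀ n, u n γ = 0 := by simpa using hc
  have h1 := ((lp.evalCLM ℝ (fun _ : Γ => ℝ) ⊤ γ).continuous.tendsto x).comp hlim
  have h2 : Filter.Tendsto (fun _ : ℕ => (0 : ℝ)) Filter.atTop (nhds (x γ)) :=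
    h1.congr fun n => h0 n
  exact hγ (tendsto_nhds_unique h2 tendsto_const_nhds)

/-- Disjointly supported vectors `y j` in the unit ball of `ℓ_∞^c(Γ)` are the images of the unit
vectors under a bounded operator on `c₀(Γ)`. Disjointness is expressed by `q`, which assigns to `γ` the only `j` for which `y j γ` may
be nonzero. -/
lemma exists_disjoint_operator {Γ : Type*} (y : Γ → ellc Γ) (q : Γ → Γ) (hy : ∀ j, ‖y j‖ ≤ 1)
    (hq : ∀ j γ, (y j : lp (fun _ : Γ => ℝ) ⊤) γ ≠ 0 → q γ = j) :
    ∃ U : c0sub Γ →L[ℝ] ellc Γ, ∀ j, U (c0single j) = y j := by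
  obtain ⟨L, hL⟩ := exists_weighted_comp q
    (fun γ => (y (q γ) : lp (fun _ : Γ => ℝ) ⊤) γ)
    (fun γ => (lp.norm_apply_le_norm ENNReal.top_ne_zero
      (y (q γ) : lp (fun _ : Γ => ℝ) ⊤) γ).trans (hy _))
  have hLy : ∀ j, L (c0single j : c0sub Γ) = y j := by
    intro j
    ext γ
    rw [hL, c0single_apply]
    split_ifs with h
    · rw [h, mul_one]
    · rw [mul_zero]
      by_contra h0
      exact h (hq j γ (Ne.symm h0))
  obtain ⟨U, hU⟩ := exists_c0_restrict L (ellc Γ) (isClosed_ellc Γ)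
    (fun j => by rw [hLy]; exact (y j).2)
  exact ⟨U, fun j => Subtype.ext (by rw [hU, hLy])⟩

theorem ellc_kernel_of_not_fixing_c0 {Γ X : Type*} [NormedAddCommGroup X] [NormedSpace ℝ X]
    (hcof : Cardinal.aleph0 < (Cardinal.ord #Γ).cof)
    (T : ↥(ellc Γ) →L[ℝ] X)
    (hfix : ¬∃ (U : ↥(c0sub Γ) →L[ℝ] ↥(ellc Γ)) (c : ℝ), 0 < c ∧
      ∀ x : ↥(c0sub Γ), c * ‖x‖ ≤ ‖T (U x)‖) :
    ∃ Λ : Set Γ, #Λ = #Γ ∧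
      ∀ x : ↥(ellc Γ), {γ : Γ | (x : lp (fun _ : Γ => ℝ) ⊤) γ ≠ 0} ⊆ Λ → T x = 0 := by
  classical
  by_contra hcon
  push Not at hcon
  have hinf : Cardinal.aleph0 ≤ #Γ := hcof.le.trans (Ordinal.cof_ord_le #Γ)
  obtain ⟨e⟩ : Nonempty (Γ × Γ ≃ Γ) := by
    rw [← Cardinal.eq, Cardinal.mk_prod, Cardinal.lift_id]
    exact Cardinal.mul_eq_self hinf
  have hex : ∀ i, ∃ x : ellc Γ, ‖x‖ ≤ 1 ∧ T x ≠ 0 ∧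
      ∀ γ, (x : lp (fun _ : Γ => ℝ) ⊤) γ ≠ 0 → (e.symm γ).1 = i := by
    intro i
    obtain ⟨x, hx, hTx⟩ := hcon (Set.range fun j => e (i, j))
      (Cardinal.mk_range_eq _ fun j k hjk => by simpa using hjk)
    have hx0 : ‖x‖ ≠ 0 := by
      intro h0
      rw [norm_eq_zero] at h0
      exact hTx (by rw [h0, map_zero])
    refine ⟨‖x‖⁻¹ • x, ?_, ?_, fun γ hγ => ?_⟩
    · rw [norm_smul, norm_inv, norm_norm, inv_mul_cancel₀ hx0]
    · rw [map_smul]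
      exact smul_ne_zero (inv_ne_zero hx0) hTx
    · have : (x : lp (fun _ : Γ => ℝ) ⊤) γ ≠ 0 := by
        intro h0
        exact hγ (by simp [h0])
      obtain ⟨j, hj⟩ := hx this
      rw [← hj]
      simp
  choose x hx1 hTx hxs using hex
  choose N hN using fun i => exists_nat_one_div_lt (norm_pos_iff.2 (hTx i))
  -- `ULift` puts `ℕ` in the universe of `Γ`.
  obtain ⟨⟨n⟩, hn⟩ := Cardinal.infinite_pigeonhole (fun i => ULift.up (N i)) hinf
    (by simpa using hcof)
  obtain ⟨g⟩ := Cardinal.eq.1 hn.symm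
  have hgN : ∀ i, N (g i) = n := fun i => ULift.up_injective (g i).2
  have : Nonempty Γ := Cardinal.mk_ne_zero_iff.1 (Cardinal.aleph0_pos.trans_le hinf).ne'
  have hg : Function.Injective fun i => (g i : Γ) := Subtype.val_injective.comp g.injective
  obtain ⟨U, hU⟩ := exists_disjoint_operator (fun i => x (g i))
    (fun γ => Function.invFun (fun i => (g i : Γ)) (e.symm γ).1) (fun j => hx1 _) (by
      intro j γ hγ
      rw [hxs _ _ hγ]
      exact Function.leftInverse_invFun hg j)
  obtain ⟨E, c, hc, hE⟩ := exists_c0_lower_bound e (T.comp U) (δ := 1 / ((n : ℝ) + 1))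
    (by positivity) (by
      intro j
      have h1 := (hN (g j)).le
      rw [hgN j] at h1
      rwa [ContinuousLinearMap.comp_apply, hU])
  exact hfix ⟨U.comp E, c, hc, hE⟩
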